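/- Suppose H = (V,E) is a hypertree such that for each edge e ∈ E there exists a family of subsets (S(π))_{π ∈ S_e} with the set of nonconstant colorings of e equal to the disjoint union over π ∈ S_e of A(π, S(π)). Then X_H is F-positive. -/

import Mathlib

/-- A path in the hypergraph with edge set `E`: a sequence
`v₀, e₀, v₁, e₁, …, e_{m-1}, v_m` with distinct edges `eᵢ ∈ E`, distinct vertices
(except that the first and last vertex may coincide), and `vᵢ, vᵢ₊₁ ∈ eᵢ`. -/
structure HPath {V : Type} (E : Set (Set V)) where
  m : ℕ
  vert : Fin (m + 1) → V
  edge : Fin m → Set V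
  edge_mem : ∀ i, edge i ∈ E
  edge_inj : Function.Injective edge
  vert_almost_inj : ∀ i j : Fin (m + 1), vert i = vert j →
    i = j ∨ (i = 0 ∧ j = Fin.last m) ∨ (j = 0 ∧ i = Fin.last m)
  mem_left : ∀ i : Fin m, vert i.castSucc ∈ edge i
  mem_right : ∀ i : Fin m, vert i.succ ∈ edge i

/-- The first vertex of a path. -/
def HPath.first {V : Type} {E : Set (Set V)} (p : HPath E) : V := p.vert 0

/-- The last vertex of a path. -/
def HPath.last {V : Type} {E : Set (Set V)} (p : HPath E) : V := p.vert (Fin.last p.m)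

/-- A cycle is a path with `v₀ = v_m` and more than one edge. -/
def HPath.IsCycle {V : Type} {E : Set (Set V)} (p : HPath E) : Prop :=
  p.first = p.last ∧ 1 < p.m

/-- The hypergraph with edge set `E` is connected on the vertex set `W`. -/
def ConnectedOn {V : Type} (W : Set V) (E : Set (Set V)) : Prop :=
  ∀ v ∈ W, ∀ v' ∈ W, ∃ p : HPath E, p.first = v ∧ p.last = v'

/-- `(W, E)` is a hypertree: every edge is a subset of `W` of size at least 2,
the hypergraph is connected on `W`, and it has no cycles. -/
def IsHypertreeOn {V : Type} (W : Set V) (E : Set (Set V)) : Prop :=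
  (∀ e ∈ E, e ⊆ W ∧ 2 ≤ e.ncard) ∧ ConnectedOn W E ∧ ∀ p : HPath E, ¬ p.IsCycle

open Classical in
/-- The power sum symmetric function `p_i = x₁^i + x₂^i + ⋯` (variables indexed by `ℕ`),
as a multivariate power series: the coefficient of a monomial `d` is 1 iff `d = x_j^i`. -/
noncomputable def powerSum (i : ℕ) : MvPowerSeries ℕ ℚ :=
  fun d => if ∃ j, d = Finsupp.single j i then 1 else 0

/-- The fundamental quasisymmetric function `F_S` of degree `n` (0-indexed descent
positions `S ⊆ {0, …, n-2}`): the coefficient of a monomial `d` is the number of weakly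
increasing sequences `g : Fin n → ℕ`, strictly increasing from position `i` to `i+1`
for `i ∈ S`, whose content is `d`. -/
noncomputable def funF (n : ℕ) (S : Set ℕ) : MvPowerSeries ℕ ℚ :=
  fun d => (Nat.card {g : Fin n → ℕ //
    (∀ i : ℕ, ∀ h : i + 1 < n,
      g ⟨i, Nat.lt_of_succ_lt h⟩ ≤ g ⟨i + 1, h⟩ ∧
      (i ∈ S → g ⟨i, Nat.lt_of_succ_lt h⟩ < g ⟨i + 1, h⟩)) ∧
    ∀ j : ℕ, d j = Nat.card {t : Fin n // g t = j}} : ℚ)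

/-- The chromatic symmetric function of the hypergraph with edge set `E` on the
finite vertex type `V`: the coefficient of a monomial `d` is the number of colorings
`χ : V → ℕ` with no edge monochromatic and content `d`. -/
noncomputable def chromSym {V : Type} [Fintype V] (E : Set (Set V)) :
    MvPowerSeries ℕ ℚ :=
  fun d => (Nat.card {χ : V → ℕ //
    (∀ e ∈ E, ¬ ∃ a, ∀ v ∈ e, χ v = a) ∧
    ∀ j : ℕ, d j = Nat.card {v : V // χ v = j}} : ℚ)

/-- The (0-indexed) descent set of a map `g : Fin n → Fin n`. -/
def desSetF (n : ℕ) (g : Fin n → Fin n) : Set ℕ :=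
  {i | ∃ h : i + 1 < n, g ⟨i + 1, h⟩ < g ⟨i, Nat.lt_of_succ_lt h⟩}

/-- `f ∈ A(π, S)` for a labeling `π : V ≃ Fin n`: `f` is weakly increasing along
`π⁻¹(0), …, π⁻¹(n-1)`, strictly from position `i` to `i+1` whenever `i ∈ S`. -/
def inAV {V : Type} (n : ℕ) (π : V ≃ Fin n) (S : Set ℕ) (f : V → ℕ) : Prop :=
  ∀ i : ℕ, ∀ h : i + 1 < n,
    f (π.symm ⟨i, Nat.lt_of_succ_lt h⟩) ≤ f (π.symm ⟨i + 1, h⟩) ∧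
    (i ∈ S → f (π.symm ⟨i, Nat.lt_of_succ_lt h⟩) < f (π.symm ⟨i + 1, h⟩))

open Classical in
/-- Sum of `φ` over colorings of content `d`. -/
theorem content_finite {V : Type} [Fintype V] (d : ℕ →₀ ℕ) :
    {χ : V → ℕ | ∀ j : ℕ, d j = Nat.card {v : V // χ v = j}}.Finite := by
  apply Set.Finite.subset (Set.Finite.pi' (fun _ : V => d.support.finite_toSet))
  intro χ hχ v
  simp only [Set.mem_ofPred_eq] at hχ
  simp only [Finset.mem_coe, Finsupp.mem_support_iff]
  rw [hχ]
  have : Nonempty {w : V // χ w = χ v} := ⟨⟨v, rfl⟩⟩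
  exact Nat.card_pos.ne'

noncomputable def gfun {V : Type} [Fintype V] (φ : (V → ℕ) → ℚ) : MvPowerSeries ℕ ℚ :=
  fun d => ∑ χ ∈ (content_finite (V := V) d).toFinset, φ χ

open Classical in
theorem card_eq_gfun {V : Type} [Fintype V] (P : (V → ℕ) → Prop) (d : ℕ →₀ ℕ) :
    (Nat.card {χ : V → ℕ // P χ ∧ ∀ j : ℕ, d j = Nat.card {v : V // χ v = j}} : ℚ)
      = ∑ χ ∈ (content_finite (V := V) d).toFinset, (if P χ then 1 else 0 : ℚ) := by
  rw [Finset.sum_boole]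
  congr 1
  rw [Nat.subtype_card]
  intro χ
  simp [and_comm]

def FPos (n : ℕ) (X : MvPowerSeries ℕ ℚ) : Prop :=
  ∃ a : Finset ℕ → ℚ, (∀ S, 0 ≤ a S) ∧
      X = ∑ S ∈ (Finset.range (n - 1)).powerset, a S • funF n ↑S

theorem FPos.zero (n : ℕ) : FPos n 0 := ⟨fun _ => 0, by simp, by simp⟩

theorem FPos.add {n : ℕ} {X Y : MvPowerSeries ℕ ℚ} (hX : FPos n X) (hY : FPos n Y) :
    FPos n (X + Y) := by
  obtain ⟨a, ha, rfl⟩ := hX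
  obtain ⟨b, hb, rfl⟩ := hY
  exact ⟨fun S => a S + b S, fun S => add_nonneg (ha S) (hb S), by
    rw [← Finset.sum_add_distrib]; simp only [add_smul]⟩

theorem FPos.smul {n : ℕ} {X : MvPowerSeries ℕ ℚ} (hX : FPos n X) (c : ℚ) (hc : 0 ≤ c) :
    FPos n (c • X) := by
  obtain ⟨a, ha, rfl⟩ := hX
  exact ⟨fun S => c * a S, fun S => mul_nonneg hc (ha S), by
    rw [Finset.smul_sum]; simp only [mul_smul]⟩

theorem FPos.sum {n : ℕ} {ι : Type} (s : Finset ι) (X : ι → MvPowerSeries ℕ ℚ)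
    (h : ∀ i ∈ s, FPos n (X i)) : FPos n (∑ i ∈ s, X i) :=
  Finset.sum_induction X (FPos n) (fun _ _ => FPos.add) (FPos.zero n) h

theorem gfun_sum_smul {V : Type} [Fintype V] {ι : Type} (s : Finset ι) (c : ι → ℚ)
    (φ : ι → (V → ℕ) → ℚ) :
    gfun (fun χ => ∑ i ∈ s, c i * φ i χ) = ∑ i ∈ s, c i • gfun (φ i) := by
  funext d
  classical
  have key : ∀ t : Finset ι, (∑ i ∈ t, c i • gfun (φ i)) d = ∑ i ∈ t, c i * (gfun (φ i) d) := by
    intro t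
    induction t using Finset.induction_on with
    | empty => rfl
    | insert a t ha ih =>
      rw [Finset.sum_insert ha, Finset.sum_insert ha, ← ih]; rfl
  rw [key]
  simp only [gfun, Finset.mul_sum]
  rw [Finset.sum_comm]

theorem FPos_funF (n : ℕ) (S : Set ℕ) : FPos n (funF n S) := by
  classical
  refine ⟨fun T => if T = (Finset.range (n-1)).filter (· ∈ S) then 1 else 0, ?_, ?_⟩
  · intro T; dsimp only; split_ifs <;> norm_num
  · simp only [ite_smul, one_smul, zero_smul]
    rw [Finset.sum_ite_eq' , if_pos (by simp)]
    funext d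
    unfold funF
    congr 2
    apply congrArg
    funext g
    refine propext (and_congr_left fun _ => forall_congr' fun i => forall_congr' fun h => ?_)
    have : i < n - 1 := by omega
    simp [this]

open Classical in
theorem gfun_inAV {V : Type} [Fintype V] (n : ℕ) (π : V ≃ Fin n) (S : Set ℕ) :
    gfun (fun χ => if inAV n π S χ then 1 else 0) = funF n S := by
  funext d
  rw [gfun, ← card_eq_gfun, funF]
  congr 1
  apply Nat.card_congr
  refine Equiv.subtypeEquiv (π.arrowCongr (Equiv.refl ℕ)) ?_
  intro χ
  refine and_congr (by rfl) (forall_congr' fun j => ?_)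
  have : Nat.card {v : V // χ v = j} =
      Nat.card {t : Fin n // (π.arrowCongr (Equiv.refl ℕ)) χ t = j} := by
    apply Nat.card_congr
    exact Equiv.subtypeEquiv π (by intro v; simp)
  rw [this]

/-- Sorting by an arbitrary key. -/
theorem exists_sort {V : Type} [Fintype V] (n : ℕ) (hn : Fintype.card V = n)
    {α : Type} [LinearOrder α] (k : V → α) :
    ∃ σ : V ≃ Fin n, ∀ u v, k u < k v → σ u < σ v := by
  obtain ⟨e⟩ : Nonempty (V ≃ Fin n) := ⟨Fintype.equivFinOfCardEq hn⟩
  refine ⟨e.trans (Tuple.sort (k ∘ e.symm)).symm, fun u v huv => ?_⟩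
  by_contra hc
  push Not at hc
  have := Tuple.monotone_sort (k ∘ e.symm) hc
  simp at this
  exact absurd huv (not_lt.mpr this)

theorem strictMono_of_consec {n : ℕ} {α : Type} [Preorder α] (f : Fin n → α)
    (h : ∀ i : ℕ, ∀ h : i + 1 < n, f ⟨i, Nat.lt_of_succ_lt h⟩ < f ⟨i + 1, h⟩) : StrictMono f := by
  cases n with
  | zero => intro i; exact i.elim0
  | succ n =>
    rw [Fin.strictMono_iff_lt_succ]
    intro i
    exact h i (by omega)

theorem monotone_of_consec {n : ℕ} {α : Type} [Preorder α] (f : Fin n → α)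
    (h : ∀ i : ℕ, ∀ h : i + 1 < n, f ⟨i, Nat.lt_of_succ_lt h⟩ ≤ f ⟨i + 1, h⟩) : Monotone f := by
  cases n with
  | zero => intro i; exact i.elim0
  | succ n =>
    rw [Fin.monotone_iff_le_succ]
    intro i
    exact h i (by omega)

def lexKey {V : Type} {n : ℕ} (σ : V ≃ Fin n) (χ : V → ℕ) (v : V) : ℕ ×ₗ Fin n :=
  toLex (χ v, σ v)

theorem inAV_iff {V : Type} (n : ℕ) (σ π : V ≃ Fin n) (χ : V → ℕ) :
    inAV n π (desSetF n (σ ∘ π.symm)) χ ↔ StrictMono (lexKey σ χ ∘ π.symm) := by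
  constructor
  · intro h
    apply strictMono_of_consec
    intro i hi
    obtain ⟨h1, h2⟩ := h i hi
    simp only [lexKey, Function.comp, Prod.Lex.toLex_lt_toLex]
    rcases h1.lt_or_eq with h3 | h3
    · exact Or.inl h3
    · refine Or.inr ⟨h3, ?_⟩
      by_contra hc
      push Not at hc
      rcases hc.lt_or_eq with h4 | h4
      · exact absurd (h2 ⟨hi, h4⟩) (by omega)
      · have := π.symm.injective (σ.injective h4)
        simp at this
  · intro h i hi
    have h1 : (⟨i, Nat.lt_of_succ_lt hi⟩ : Fin n) < ⟨i+1, hi⟩ := by simp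
    have h2 := h h1
    simp only [lexKey, Function.comp, Prod.Lex.toLex_lt_toLex] at h2
    refine ⟨by rcases h2 with h2 | h2 <;> omega, ?_⟩
    rintro ⟨_, h3⟩
    rcases h2 with h2 | h2
    · exact h2
    · exact absurd h3 (not_lt.mpr h2.2.le)

theorem lexKey_injective {V : Type} {n : ℕ} (σ : V ≃ Fin n) (χ : V → ℕ) :
    Function.Injective (lexKey σ χ) := by
  intro u v h
  have : (χ u, σ u) = (χ v, σ v) := h
  exact σ.injective (Prod.ext_iff.mp this).2

theorem existsUnique_inAV {V : Type} [Fintype V] (n : ℕ) (σ : V ≃ Fin n) (χ : V → ℕ) :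
    ∃! π : V ≃ Fin n, inAV n π (desSetF n (σ ∘ π.symm)) χ := by
  simp only [inAV_iff]
  obtain ⟨π, hπ⟩ := exists_sort n (by simpa using Fintype.card_congr σ) (lexKey σ χ)
  refine ⟨π, ?_, ?_⟩
  · intro i j hij
    rcases lt_trichotomy ((lexKey σ χ ∘ π.symm) i) ((lexKey σ χ ∘ π.symm) j) with h | h | h
    · exact h
    · exact absurd (π.symm.injective (lexKey_injective σ χ h)) hij.ne
    · have := hπ _ _ h
      simp at this
      exact absurd hij (not_lt.mpr this.le)
  · intro π' hπ'
    have hm : StrictMono (lexKey σ χ ∘ π.symm) := by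
      intro i j hij
      rcases lt_trichotomy ((lexKey σ χ ∘ π.symm) i) ((lexKey σ χ ∘ π.symm) j) with h | h | h
      · exact h
      · exact absurd (π.symm.injective (lexKey_injective σ χ h)) hij.ne
      · have := hπ _ _ h
        simp at this
        exact absurd hij (not_lt.mpr this.le)
    have := (StrictMono.range_inj hπ' hm).mp (by
      rw [Set.range_comp, Set.range_comp]; simp)
    have h2 : π'.symm = π.symm := by
      ext i
      exact lexKey_injective σ χ (congrFun this i)
    rw [← Equiv.symm_symm π', h2, Equiv.symm_symm]

/-- A system of weak and strict inequalities. -/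
structure IneqSys (V : Type) where
  W : V → V → Prop
  St : V → V → Prop

def IneqSys.sat {V : Type} (c : IneqSys V) (χ : V → ℕ) : Prop :=
  (∀ u v, c.W u v → χ u ≤ χ v) ∧ (∀ u v, c.St u v → χ u < χ v)

def IneqSys.adm {V : Type} {α : Type} [LT α] (c : IneqSys V) (ω : V → α) : Prop :=
  (∀ u v, c.W u v → ω u < ω v) ∧ (∀ u v, c.St u v → ω v < ω u)

/-- If there is no descent strictly inside, the sequence increases. -/
theorem no_des_between {n : ℕ} (τ : Fin n → Fin n) (χ : Fin n → ℕ)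
    (h : ∀ i : ℕ, ∀ h : i + 1 < n,
      χ ⟨i, Nat.lt_of_succ_lt h⟩ ≤ χ ⟨i + 1, h⟩ ∧
      (i ∈ desSetF n τ → χ ⟨i, Nat.lt_of_succ_lt h⟩ < χ ⟨i + 1, h⟩))
    (i j : Fin n) (hij : i ≤ j) (hτ : τ j < τ i) : χ i < χ j := by
  have hm : Monotone χ := monotone_of_consec χ (fun i hi => (h i hi).1)
  by_contra hc
  have heq : χ i = χ j := le_antisymm (hm hij) (not_lt.mp hc)
  have key : ∀ k : ℕ, ∀ hk : k < n, i.1 ≤ k → k ≤ j.1 → τ i ≤ τ ⟨k, hk⟩ := by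
    intro k hk h1
    induction k, h1 using Nat.le_induction with
    | base => intro _; exact le_refl _
    | succ k hik ih =>
      intro h2
      refine (ih (by omega) (by omega)).trans ?_
      by_contra hlt
      have h3 := (h k hk).2 ⟨hk, not_le.mp hlt⟩
      have h4 : χ i ≤ χ ⟨k, by omega⟩ := hm (by simpa [Fin.le_def] using hik)
      have h5 : χ ⟨k+1, hk⟩ ≤ χ j := hm (by simpa [Fin.le_def] using h2)
      omega
  exact absurd hτ (not_lt.mpr (key j j.2 hij le_rfl))

open Classical in
theorem sat_indicator {V : Type} [Fintype V] (n : ℕ) (c : IneqSys V) (σ : V ≃ Fin n)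
    (hc : c.adm σ) (χ : V → ℕ) :
    (if c.sat χ then 1 else 0 : ℚ) =
      ∑ π : V ≃ Fin n, (if (∀ u v, c.W u v ∨ c.St u v → π u < π v) then 1 else 0 : ℚ) *
        (if inAV n π (desSetF n (σ ∘ π.symm)) χ then 1 else 0) := by
  obtain ⟨π, hπ, huniq⟩ := existsUnique_inAV n σ χ
  rw [Finset.sum_eq_single π]
  · rw [if_pos hπ, mul_one]
    congr 1
    have hlt := (inAV_iff n σ π χ).mp hπ
    have hlt' : ∀ u v, lexKey σ χ u < lexKey σ χ v → π u < π v := by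
      intro u v h
      have := (hlt.lt_iff_lt (a := π u) (b := π v)).mp (by simpa using h)
      exact this
    apply propext
    constructor
    · intro hs u v huv
      apply hlt'
      simp only [lexKey, Prod.Lex.toLex_lt_toLex]
      rcases huv with h | h
      · rcases (hs.1 u v h).lt_or_eq with h2 | h2
        · exact Or.inl h2
        · exact Or.inr ⟨h2, hc.1 u v h⟩
      · exact Or.inl (hs.2 u v h)
    · intro hs
      constructor
      · intro u v h
        have h1 := hs u v (Or.inl h)
        have := hlt h1
        simp only [lexKey, Function.comp, Equiv.symm_apply_apply, Prod.Lex.toLex_lt_toLex] at this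
        omega
      · intro u v h
        have h1 := hs u v (Or.inr h)
        have := hlt h1
        have h3 := hc.2 u v h
        simp only [lexKey, Function.comp, Equiv.symm_apply_apply, Prod.Lex.toLex_lt_toLex] at this
        rcases this with h4 | h4
        · exact h4
        · exact absurd h3 (not_lt.mpr h4.2.le)
  · intro π' _ hne
    rw [if_neg (fun h => hne (huniq π' h)), mul_zero]
  · simp

open Classical in
theorem FPos_sat {V : Type} [Fintype V] (n : ℕ) (hn : Fintype.card V = n) (c : IneqSys V)
    (ω : V → ℤ) (hc : c.adm ω) : FPos n (gfun (fun χ => if c.sat χ then 1 else 0)) := by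
  obtain ⟨σ, hσ⟩ := exists_sort n hn ω
  have hc' : c.adm σ := ⟨fun u v h => hσ _ _ (hc.1 u v h), fun u v h => hσ _ _ (hc.2 u v h)⟩
  simp only [sat_indicator n c σ hc']
  rw [gfun_sum_smul]
  apply FPos.sum
  intro π _
  apply FPos.smul
  · rw [gfun_inAV]; exact FPos_funF n _
  · split_ifs <;> norm_num

/-- Potential along a chain. -/
noncomputable def pot (S : Finset ℕ) (j : ℕ) : ℤ := ∑ i ∈ Finset.range j, if i ∈ S then -1 else 1

theorem pot_succ (S : Finset ℕ) (j : ℕ) : pot S (j+1) = pot S j + if j ∈ S then -1 else 1 := by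
  simp [pot, Finset.sum_range_succ]

open Classical in
noncomputable def desF {U : Type} (m : ℕ) (σ π : U ≃ Fin m) : Finset ℕ :=
  (Finset.range (m-1)).filter (· ∈ desSetF m (σ ∘ π.symm))

theorem inAV_desF {U : Type} (m : ℕ) (σ π : U ≃ Fin m) (χ : U → ℕ) :
    inAV m π ↑(desF m σ π) χ ↔ inAV m π (desSetF m (σ ∘ π.symm)) χ := by
  refine forall_congr' fun i => forall_congr' fun h => ?_
  have : i < m - 1 := by omega
  simp [desF, this]

theorem exists_des {U : Type} [Fintype U] (m : ℕ) (π : U ≃ Fin m) (S : Finset ℕ)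
    (hS : S ∈ (Finset.range (m-1)).powerset) : ∃ σ : U ≃ Fin m, desF m σ π = S := by
  obtain ⟨σ, hσ⟩ := exists_sort m (by simpa using Fintype.card_congr π)
    (fun u => pot S (π u))
  refine ⟨σ, ?_⟩
  ext i
  rw [Finset.mem_powerset] at hS
  simp only [desF, Finset.mem_filter, Finset.mem_range, desSetF, Set.mem_ofPred_eq, Function.comp]
  constructor
  · rintro ⟨h0, h1, h2⟩
    by_contra hi
    have := hσ (π.symm ⟨i, by omega⟩) (π.symm ⟨i+1, h1⟩) (by simp [pot_succ, hi])
    exact absurd h2 (not_lt.mpr this.le)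
  · intro hi
    have h0 := Finset.mem_range.mp (hS hi)
    refine ⟨h0, by omega, ?_⟩
    exact hσ (π.symm ⟨i+1, by omega⟩) (π.symm ⟨i, by omega⟩) (by simp [pot_succ, hi])

open Classical in
theorem const_sum {U : Type} [Fintype U] (m : ℕ) (π : U ≃ Fin m) (χ : U → ℕ) :
    ∑ S ∈ (Finset.range (m-1)).powerset, (-1 : ℚ)^S.card * (if inAV m π ↑S χ then 1 else 0)
      = if ∃ a, ∀ x, χ x = a then 1 else 0 := by
  by_cases hw : ∀ i : ℕ, ∀ h : i + 1 < m,
      χ (π.symm ⟨i, Nat.lt_of_succ_lt h⟩) ≤ χ (π.symm ⟨i + 1, h⟩)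
  · set D := (Finset.range (m-1)).filter (fun i => ∃ h : i + 1 < m,
      χ (π.symm ⟨i, Nat.lt_of_succ_lt h⟩) < χ (π.symm ⟨i + 1, h⟩)) with hD
    have h1 : ∀ S ∈ (Finset.range (m-1)).powerset, (inAV m π ↑S χ ↔ S ⊆ D) := by
      intro S hS
      rw [Finset.mem_powerset] at hS
      constructor
      · intro h i hi
        have h0 := Finset.mem_range.mp (hS hi)
        rw [hD, Finset.mem_filter]
        exact ⟨hS hi, by omega, (h i (by omega)).2 hi⟩
      · intro h i hi
        refine ⟨hw i hi, fun hiS => ?_⟩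
        have := h hiS
        rw [hD, Finset.mem_filter] at this
        exact this.2.2
    have h2 : ∑ S ∈ (Finset.range (m-1)).powerset,
        (-1 : ℚ)^S.card * (if inAV m π ↑S χ then 1 else 0) = ∑ S ∈ D.powerset, (-1 : ℚ)^S.card := by
      have : D.powerset = (Finset.range (m-1)).powerset.filter (· ⊆ D) := by
        ext S
        simp only [Finset.mem_filter, Finset.mem_powerset]
        exact ⟨fun h => ⟨h.trans (Finset.filter_subset _ _), h⟩, fun h => h.2⟩
      rw [this, Finset.sum_filter]
      apply Finset.sum_congr rfl
      intro S hS
      simp [h1 S hS]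
    have h3 : (∑ S ∈ D.powerset, (-1 : ℚ)^S.card) = if D = ∅ then 1 else 0 := by
      have := Finset.sum_powerset_neg_one_pow_card (x := D)
      exact_mod_cast congrArg (Int.cast : ℤ → ℚ) this
    rw [h2, h3]
    congr 1
    apply propext
    constructor
    · intro hDe
      have hle : ∀ i : ℕ, ∀ h : i + 1 < m,
          χ (π.symm ⟨i + 1, h⟩) ≤ χ (π.symm ⟨i, Nat.lt_of_succ_lt h⟩) := by
        intro i hi
        by_contra hc
        have : i ∈ D := by
          rw [hD, Finset.mem_filter]
          exact ⟨Finset.mem_range.mpr (by omega), hi, not_le.mp hc⟩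
        rw [hDe] at this
        simp at this
      have hm := monotone_of_consec (χ ∘ π.symm) hw
      have ha := monotone_of_consec (α := ℕᵒᵈ) (χ ∘ π.symm) hle
      rcases isEmpty_or_nonempty U with hU | ⟨⟨x0⟩⟩
      · exact ⟨0, fun x => (hU.false x).elim⟩
      · refine ⟨χ x0, fun x => ?_⟩
        rcases le_total (π x) (π x0) with h | h
        · have a1 := hm h
          have a2 : (χ ∘ π.symm) (π x0) ≤ (χ ∘ π.symm) (π x) := ha h
          simp at a1 a2; omega
        · have a1 := hm h
          have a2 : (χ ∘ π.symm) (π x) ≤ (χ ∘ π.symm) (π x0) := ha h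
          simp at a1 a2; omega
    · rintro ⟨a, ha⟩
      rw [hD, Finset.filter_eq_empty_iff]
      rintro i _ ⟨h, h'⟩
      rw [ha, ha] at h'
      omega
  · have hnc : ¬ ∃ a, ∀ x, χ x = a := by
      rintro ⟨a, ha⟩
      exact hw (fun i h => by rw [ha, ha])
    rw [if_neg hnc]
    apply Finset.sum_eq_zero
    intro S _
    rw [if_neg (fun h => hw (fun i hi => (h i hi).1)), mul_zero]

open Classical in
noncomputable def coefE {U : Type} [Fintype U] (m : ℕ) (π : U ≃ Fin m) (S : Finset ℕ) : ℚ :=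
  (((Finset.univ.filter (fun σ : U ≃ Fin m => desF m σ π = S)).card : ℚ) - (-1)^S.card) /
    (Fintype.card (U ≃ Fin m) : ℚ)

theorem coefE_nonneg {U : Type} [Fintype U] (m : ℕ) (π : U ≃ Fin m) (S : Finset ℕ)
    (hS : S ∈ (Finset.range (m-1)).powerset) : 0 ≤ coefE m π S := by
  classical
  obtain ⟨σ, hσ⟩ := exists_des m π S hS
  unfold coefE
  apply div_nonneg _ (by positivity)
  have h1 : 1 ≤ (Finset.univ.filter (fun σ : U ≃ Fin m => desF m σ π = S)).card :=
    Finset.card_pos.mpr ⟨σ, by simp [hσ]⟩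
  have h2 : (1 : ℚ) ≤ (Finset.univ.filter (fun σ : U ≃ Fin m => desF m σ π = S)).card := by
    exact_mod_cast h1
  have h3 : (-1 : ℚ)^S.card ≤ 1 := by
    rcases neg_one_pow_eq_or ℚ S.card with h | h <;> rw [h] <;> norm_num
  convert sub_nonneg.mpr (h3.trans h2)

open Classical in
/-- Fractional partition of the nonconstant colorings. -/
theorem edge_identity {U : Type} [Fintype U] (m : ℕ) (hm : Fintype.card U = m) (χ : U → ℕ) :
    (if ¬ ∃ a, ∀ x, χ x = a then 1 else 0 : ℚ) =
      ∑ π : U ≃ Fin m, ∑ S ∈ (Finset.range (m-1)).powerset,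
        coefE m π S * (if inAV m π ↑S χ then 1 else 0) := by
  have hN : (Fintype.card (U ≃ Fin m) : ℚ) ≠ 0 := by
    have : Nonempty (U ≃ Fin m) := ⟨Fintype.equivFinOfCardEq hm⟩
    exact_mod_cast Fintype.card_ne_zero
  have hA : ∀ π : U ≃ Fin m, ∑ S ∈ (Finset.range (m-1)).powerset,
      ((Finset.univ.filter (fun σ : U ≃ Fin m => desF m σ π = S)).card : ℚ) *
        (if inAV m π ↑S χ then 1 else 0) =
      ∑ σ : U ≃ Fin m, (if inAV m π (desSetF m (σ ∘ π.symm)) χ then 1 else 0 : ℚ) := by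
    intro π
    simp only [← inAV_desF]
    rw [← Finset.sum_fiberwise_of_maps_to (s := Finset.univ)
      (t := (Finset.range (m-1)).powerset) (g := fun σ => desF m σ π)
      (fun σ _ => Finset.mem_powerset.mpr (Finset.filter_subset _ _))]
    apply Finset.sum_congr rfl
    intro S _
    rw [← nsmul_eq_mul, ← Finset.sum_const]
    apply Finset.sum_congr rfl
    intro σ hσ
    rw [(Finset.mem_filter.mp hσ).2]
  have hB : ∑ π : U ≃ Fin m, ∑ σ : U ≃ Fin m,
      (if inAV m π (desSetF m (σ ∘ π.symm)) χ then 1 else 0 : ℚ) =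
        Fintype.card (U ≃ Fin m) := by
    rw [Finset.sum_comm]
    have : ∀ σ : U ≃ Fin m, ∑ π : U ≃ Fin m,
      (if inAV m π (desSetF m (σ ∘ π.symm)) χ then 1 else 0 : ℚ) = 1 := by
      intro σ
      obtain ⟨π, hπ, hu⟩ := existsUnique_inAV m σ χ
      rw [Finset.sum_eq_single π]
      · rw [if_pos hπ]
      · intro π' _ hne
        rw [if_neg (fun h => hne (hu π' h))]
      · simp
    simp [this]
  have hC : ∀ π : U ≃ Fin m, ∑ S ∈ (Finset.range (m-1)).powerset,
        coefE m π S * (if inAV m π ↑S χ then 1 else 0) =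
      (∑ σ : U ≃ Fin m, (if inAV m π (desSetF m (σ ∘ π.symm)) χ then 1 else 0 : ℚ) -
        if ∃ a, ∀ x, χ x = a then 1 else 0) / Fintype.card (U ≃ Fin m) := by
    intro π
    rw [← hA, ← const_sum m π χ, ← Finset.sum_sub_distrib, Finset.sum_div]
    apply Finset.sum_congr rfl
    intro S _
    unfold coefE
    ring
  simp only [hC]
  rw [← Finset.sum_div, Finset.sum_sub_distrib, hB, Finset.sum_const, Finset.card_univ,
    nsmul_eq_mul, eq_div_iff hN]
  by_cases h : ∃ a, ∀ x, χ x = a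
  · rw [if_neg (not_not.mpr h), if_pos h]; ring
  · rw [if_pos h, if_neg h]; ring

/-- The chain constraint on an edge. -/
def chainCon {V : Type} (e : Set V) (m : ℕ) (π : ↥e ≃ Fin m) (S : Finset ℕ) : IneqSys V where
  W u v := ∃ i, ∃ h : i + 1 < m, i ∉ S ∧ u = π.symm ⟨i, Nat.lt_of_succ_lt h⟩ ∧ v = π.symm ⟨i+1, h⟩
  St u v := ∃ i, ∃ h : i + 1 < m, i ∈ S ∧ u = π.symm ⟨i, Nat.lt_of_succ_lt h⟩ ∧ v = π.symm ⟨i+1, h⟩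

theorem chainCon_sat {V : Type} (e : Set V) (m : ℕ) (π : ↥e ≃ Fin m) (S : Finset ℕ) (χ : V → ℕ) :
    (chainCon e m π S).sat χ ↔ inAV m π ↑S (fun x : ↥e => χ x) := by
  constructor
  · rintro ⟨h1, h2⟩ i hi
    by_cases hiS : i ∈ S
    · have := h2 _ _ ⟨i, hi, hiS, rfl, rfl⟩
      exact ⟨this.le, fun _ => this⟩
    · exact ⟨h1 _ _ ⟨i, hi, hiS, rfl, rfl⟩, fun h => absurd h hiS⟩
  · intro h
    constructor
    · rintro u v ⟨i, hi, hiS, rfl, rfl⟩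
      exact (h i hi).1
    · rintro u v ⟨i, hi, hiS, rfl, rfl⟩
      exact (h i hi).2 hiS

open Classical in
noncomputable def chainPot {V : Type} (e : Set V) (m : ℕ) (π : ↥e ≃ Fin m) (S : Finset ℕ)
    (v : V) : ℤ := if h : v ∈ e then pot S (π ⟨v, h⟩) else 0

def HPath.incl {V : Type} {E E' : Set (Set V)} (h : E ⊆ E') (p : HPath E) : HPath E' :=
  { p with edge_mem := fun i => h (p.edge_mem i) }

/-- Graph of co-membership. -/
def coGraph {V : Type} (E : Set (Set V)) : SimpleGraph V where
  Adj a b := a ≠ b ∧ ∃ e ∈ E, a ∈ e ∧ b ∈ e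
  symm := ⟨fun _ _ h => ⟨h.1.symm, by obtain ⟨e, he, ha, hb⟩ := h.2; exact ⟨e, he, hb, ha⟩⟩⟩
  loopless := ⟨fun _ h => h.1 rfl⟩

theorem not_reachable {V : Type} (E : Set (Set V)) (e0 : Set V) (he0 : e0 ∉ E)
    (hac : ∀ p : HPath (insert e0 E), ¬ p.IsCycle) (u v : V) (hu : u ∈ e0) (hv : v ∈ e0)
    (huv : u ≠ v) : ¬ (coGraph E).Reachable u v := by
  intro hr
  set G := coGraph E
  obtain ⟨p, hp⟩ := hr.exists_walk_length_eq_dist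
  have hreach : ∀ i, G.Reachable u (p.getVert i) := fun i => ⟨p.take i⟩
  have hd : ∀ i, i ≤ p.length → G.dist u (p.getVert i) = i := by
    intro i hi
    apply le_antisymm
    · have := SimpleGraph.dist_le (p.take i)
      rw [SimpleGraph.Walk.take_length] at this
      omega
    · have h1 := SimpleGraph.dist_le (p.drop i)
      rw [SimpleGraph.Walk.drop_length] at h1
      obtain ⟨q, hq⟩ := (hreach i).exists_walk_length_eq_dist
      have h2 := SimpleGraph.dist_le (q.append (p.drop i))
      rw [SimpleGraph.Walk.length_append, SimpleGraph.Walk.drop_length] at h2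
      omega
  have hedge : ∀ i, i < p.length → ∃ e ∈ E, p.getVert i ∈ e ∧ p.getVert (i+1) ∈ e :=
    fun i hi => (p.adj_getVert_succ hi).2
  choose! ed hed1 hed2 hed3 using hedge
  have hpos : 0 < p.length := by
    rcases Nat.eq_zero_or_pos p.length with h | h
    · exact absurd (SimpleGraph.Walk.eq_of_length_eq_zero h) huv
    · exact h
  have hinj : ∀ i j, i < p.length → j < p.length → ed i = ed j → i < j → False := by
    intro i j hi hj h hij
    have h1 : G.dist (p.getVert i) (p.getVert (j+1)) ≤ 1 := by
      by_cases h2 : p.getVert i = p.getVert (j+1)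
      · rw [h2]; simp
      · have hadj : G.Adj (p.getVert i) (p.getVert (j+1)) :=
          ⟨h2, ed i, hed1 i hi, hed2 i hi, by rw [h]; exact hed3 j hj⟩
        exact (SimpleGraph.dist_eq_one_iff_adj.mpr hadj).le
    have h3 : G.dist u (p.getVert (j+1)) ≤ G.dist u (p.getVert i) + 1 := by
      obtain ⟨q, hq⟩ := (hreach i).exists_walk_length_eq_dist
      have hr2 : G.Reachable (p.getVert i) (p.getVert (j+1)) := (hreach i).symm.trans (hreach _)
      obtain ⟨q2, hq2⟩ := hr2.exists_walk_length_eq_dist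
      have := SimpleGraph.dist_le (q.append q2)
      rw [SimpleGraph.Walk.length_append] at this
      omega
    rw [hd _ (by omega), hd _ (by omega)] at h3
    omega
  let P : HPath (insert e0 E) :=
    { m := p.length + 1
      vert := fun i => if i.1 ≤ p.length then p.getVert i.1 else u
      edge := fun i => if i.1 < p.length then ed i.1 else e0
      edge_mem := by
        intro i
        split_ifs with h
        · exact Or.inr (hed1 _ h)
        · exact Or.inl rfl
      edge_inj := by
        intro i j hij
        beta_reduce at hij
        split_ifs at hij with h1 h2 h2
        · rcases lt_trichotomy i.1 j.1 with h | h | h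
          · exact (hinj _ _ h1 h2 hij h).elim
          · exact Fin.ext h
          · exact (hinj _ _ h2 h1 hij.symm h).elim
        · exact absurd (hij ▸ hed1 _ h1) he0
        · exact absurd (hij.symm ▸ hed1 _ h2) he0
        · ext; omega
      vert_almost_inj := by
        intro i j hij
        have hi := i.2
        have hj := j.2
        simp only [Fin.ext_iff, Fin.val_last, Fin.val_zero]
        split_ifs at hij with h1 h2 h2
        · left
          rw [← hd _ h1, ← hd _ h2, hij]
        · have := hd _ h1
          rw [hij] at this
          simp at this
          omega
        · have := hd _ h2
          rw [← hij] at this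
          simp at this
          omega
        · omega
      mem_left := by
        intro i
        have hi := i.2
        simp only [Fin.val_castSucc]
        rw [if_pos (show i.1 ≤ p.length by omega)]
        by_cases h : i.1 < p.length
        · rw [if_pos h]; exact hed2 _ h
        · rw [if_neg h]
          have : i.1 = p.length := by omega
          rw [this]; simpa using hv
      mem_right := by
        intro i
        have hi := i.2
        simp only [Fin.val_succ]
        by_cases h : i.1 < p.length
        · rw [if_pos (show i.1 + 1 ≤ p.length by omega), if_pos h]; exact hed3 _ h
        · rw [if_neg (show ¬ i.1 + 1 ≤ p.length by omega), if_neg h]; exact hu }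
  apply hac P
  refine ⟨?_, ?_⟩
  · simp [HPath.first, HPath.last, P]
  · simp only [P]; omega

theorem glue {V : Type} (E : Set (Set V)) (hE : E.Finite) (f : Set V → V → ℤ)
    (hac : ∀ p : HPath E, ¬ p.IsCycle) :
    ∃ ω : V → ℤ, ∀ e ∈ E, ∀ u ∈ e, ∀ v ∈ e, ω u - ω v = f e u - f e v := by
  classical
  induction E, hE using Set.Finite.induction_on with
  | empty => exact ⟨fun _ => 0, by simp⟩
  | @insert e0 E he0 hfin ih =>
    obtain ⟨ω, hω⟩ := ih (fun p hp => hac (p.incl (Set.subset_insert _ _)) hp)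
    have hnr := not_reachable E e0 he0 hac
    let shift : V → ℤ := fun w =>
      if h : ∃ x ∈ e0, (coGraph E).Reachable x w then f e0 h.choose - ω h.choose else 0
    have hs1 : ∀ x ∈ e0, shift x = f e0 x - ω x := by
      intro x hx
      have h : ∃ y ∈ e0, (coGraph E).Reachable y x := ⟨x, hx, SimpleGraph.Reachable.refl _⟩
      have h2 : h.choose = x := by
        by_contra hne
        exact hnr _ _ h.choose_spec.1 hx hne h.choose_spec.2
      simp only [shift]
      rw [dif_pos h, h2]
    have hs2 : ∀ w w', (coGraph E).Reachable w w' → shift w = shift w' := by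
      intro w w' hww
      have : ∀ x, (coGraph E).Reachable x w ↔ (coGraph E).Reachable x w' :=
        fun x => ⟨fun h => h.trans hww, fun h => h.trans hww.symm⟩
      simp only [shift, this]
    refine ⟨fun w => ω w + shift w, ?_⟩
    intro e he u hu v hv
    rcases he with rfl | he
    · simp only [hs1 u hu, hs1 v hv]; ring
    · have hr : (coGraph E).Reachable u v := by
        by_cases huv : u = v
        · rw [huv]
        · exact SimpleGraph.Adj.reachable ⟨huv, e, he, hu, hv⟩
      simp only [hs2 u v hr]
      have := hω e he u hu v hv
      linarith

/-- Suppose `H` is a hypertree such that for each edge `e` there is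
a family of subsets `S π ⊆ {0, …, |e|-2}` indexed by bijections `π : e ≃ Fin |e|`
for which the nonconstant colorings of `e` are the disjoint union of the sets
`A(π, S π)`. Then `X_H` is `F`-positive. -/
theorem hypertree_partition_F_positive {V : Type} [Fintype V] (E : Set (Set V))
    (hT : IsHypertreeOn Set.univ E) (n : ℕ) (hn : Fintype.card V = n)
    (hpart : ∀ e ∈ E, ∃ S : (↥e ≃ Fin (Nat.card ↥e)) → Set ℕ,
      ∀ χ : ↥e → ℕ, (¬ ∃ a, ∀ x, χ x = a) ↔
        ∃! π : ↥e ≃ Fin (Nat.card ↥e), inAV (Nat.card ↥e) π (S π) χ) :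
    ∃ a : Finset ℕ → ℚ, (∀ S, 0 ≤ a S) ∧
      chromSym E = ∑ S ∈ (Finset.range (n - 1)).powerset, a S • funF n ↑S := by
  classical
  have hfin : E.Finite := Set.toFinite E
  haveI : Fintype ↥E := hfin.fintype
  obtain ⟨-, -, hac⟩ := hT
  -- index set of the fractional partition of an edge
  let Idx : (e : ↥E) → Type := fun e => (↥e.1 ≃ Fin (Fintype.card ↥e.1)) × Finset ℕ
  let I : (e : ↥E) → Finset (Idx e) := fun e =>
    Finset.univ ×ˢ (Finset.range (Fintype.card ↥e.1 - 1)).powerset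
  let con : (e : ↥E) → Idx e → IneqSys V := fun e p => chainCon e.1 _ p.1 p.2
  have hedge : ∀ (e : ↥E) (χ : V → ℕ), (if ¬ ∃ a, ∀ v ∈ e.1, χ v = a then 1 else 0 : ℚ) =
      ∑ p ∈ I e, coefE _ p.1 p.2 * (if (con e p).sat χ then 1 else 0) := by
    intro e χ
    have h := edge_identity (Fintype.card ↥e.1) rfl (fun x : ↥e.1 => χ x)
    simp only [Subtype.forall] at h
    rw [h, Finset.sum_product]
    simp only [con, chainCon_sat]
    congr!
  let big : ((e : ↥E) → Idx e) → IneqSys V := fun p =>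
    { W := fun u v => ∃ e, (con e (p e)).W u v
      St := fun u v => ∃ e, (con e (p e)).St u v }
  have hbig : ∀ p χ, (big p).sat χ ↔ ∀ e, (con e (p e)).sat χ := by
    intro p χ
    constructor
    · rintro ⟨h1, h2⟩ e
      exact ⟨fun u v h => h1 u v ⟨e, h⟩, fun u v h => h2 u v ⟨e, h⟩⟩
    · intro h
      exact ⟨fun u v ⟨e, he⟩ => (h e).1 u v he, fun u v ⟨e, he⟩ => (h e).2 u v he⟩
  have hchrom : chromSym E = gfun (fun χ : V → ℕ => ∑ p ∈ Fintype.piFinset I,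
      (∏ e, coefE _ (p e).1 (p e).2) * (if (big p).sat χ then 1 else 0)) := by
    funext d
    rw [chromSym, card_eq_gfun, gfun]
    apply Finset.sum_congr rfl
    intro χ _
    have h1 : (if ∀ e ∈ E, ¬ ∃ a, ∀ v ∈ e, χ v = a then 1 else 0 : ℚ) =
        ∏ e : ↥E, (if ¬ ∃ a, ∀ v ∈ e.1, χ v = a then 1 else 0 : ℚ) := by
      rw [Finset.prod_boole]
      simp only [Finset.mem_univ, true_implies, Subtype.forall]
    refine Eq.trans (by congr) (h1.trans ?_)
    simp only [hedge]
    rw [Finset.prod_univ_sum]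
    apply Finset.sum_congr rfl
    intro p _
    rw [Finset.prod_mul_distrib, Finset.prod_boole]
    simp only [Finset.mem_univ, true_implies, hbig]
  change FPos n (chromSym E)
  rw [hchrom, gfun_sum_smul]
  apply FPos.sum
  intro p hp
  rw [Fintype.mem_piFinset] at hp
  apply FPos.smul
  · obtain ⟨ω, hω⟩ := glue E hfin
      (fun e v => if h : e ∈ E then chainPot e _ (p ⟨e, h⟩).1 (p ⟨e, h⟩).2 v else 0) hac
    apply FPos_sat n hn (big p) ω
    constructor
    · rintro u v ⟨e, i, hi, hiS, rfl, rfl⟩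
      have := hω e.1 e.2 _ ((p e).1.symm ⟨i, Nat.lt_of_succ_lt hi⟩).2
        _ ((p e).1.symm ⟨i+1, hi⟩).2
      simp [chainPot, pot_succ, hiS] at this
      linarith
    · rintro u v ⟨e, i, hi, hiS, rfl, rfl⟩
      have := hω e.1 e.2 _ ((p e).1.symm ⟨i, Nat.lt_of_succ_lt hi⟩).2
        _ ((p e).1.symm ⟨i+1, hi⟩).2
      simp [chainPot, pot_succ, hiS] at this
      linarith
  · apply Finset.prod_nonneg
    intro e _
    exact coefE_nonneg _ _ _ (Finset.mem_product.mp (hp e)).2
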